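/- Let 0 < q ≤ p ≤ 2. There exists a constant A_q > 0, depending only on q, such that for every Banach space X and every injective map τ : D → D, ‖T_{τ,q} ⊗ Id_X‖_q ≤ A_q · C₁^{1/q − 1/p} · ‖T_{τ,p} ⊗ Id_X‖_p (inequality in [0,∞]). -/

import Mathlib

open MeasureTheory Set
open scoped ENNReal NNReal Classical

noncomputable section

/-- A dyadic subinterval of `[0,1)`: the half-open interval
`[k/2^n, (k+1)/2^n)` with `k < 2^n`. -/
structure DyadicI where
  n : ℕ
  k : ℕ
  hk : k < 2 ^ n

instance : Nonempty DyadicI := ⟨⟨0, 0, by norm_num⟩⟩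

namespace DyadicI

/-- The length `|I| = 2^{-n}` of a dyadic interval. -/
def len (I : DyadicI) : ℝ := (2 : ℝ) ^ (-(I.n : ℤ))

/-- The left endpoint `k 2^{-n}` of a dyadic interval. -/
def lep (I : DyadicI) : ℝ := (I.k : ℝ) * I.len

/-- The underlying point set `[k/2^n, (k+1)/2^n)` of a dyadic interval. -/
def toSet (I : DyadicI) : Set ℝ := Set.Ico I.lep (I.lep + I.len)

/-- The `L^∞`-normalized Haar function `h_I`: `1` on the left half of `I`,
`-1` on the right half of `I`, `0` off `I`. -/
def haar (I : DyadicI) (t : ℝ) : ℝ :=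
  if t ∈ Set.Ico I.lep (I.lep + I.len / 2) then 1
  else if t ∈ Set.Ico (I.lep + I.len / 2) (I.lep + I.len) then -1
  else 0

end DyadicI

open DyadicI

section Defs

variable {X : Type*} [NormedAddCommGroup X] [NormedSpace ℝ X]

/-- The square function `𝕊(f)` of the `X`-valued Haar expansion `f = ∑_{I ∈ s} x_I h_I`:
`𝕊(f)(t) = (E_ε ‖∑_I ε_I x_I h_I(t)‖²)^{1/2}`, the average being taken over all
choices of signs `ε_I ∈ {±1}`, `I ∈ s`. -/
def sqFn (s : Finset DyadicI) (x : DyadicI → X) (t : ℝ) : ℝ :=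
  Real.sqrt ((∑ ε : {I // I ∈ s} → Bool,
    ‖∑ I ∈ s.attach, ((if ε I then (1 : ℝ) else -1) * haar I.1 t) • x I.1‖ ^ 2) /
      2 ^ s.card)

/-- The `H^p_X` (quasi-)norm of `f = ∑_{I ∈ s} x_I h_I`:
`‖f‖ = (∫₀¹ 𝕊(f)(t)^p dt)^{1/p}`. -/
def HpNormV (p : ℝ) (s : Finset DyadicI) (x : DyadicI → X) : ℝ :=
  (∫ t in Set.Icc (0 : ℝ) 1, sqFn s x t ^ p) ^ (1 / p)

/-- The coefficients of `(T_{τ,p} ⊗ Id_X)(f)` for `f = ∑_{I ∈ s} x_I h_I`, namely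
`(T_{τ,p} ⊗ Id_X)(f) = ∑_{I ∈ s} (|I|/|τ(I)|)^{1/p} x_I h_{τ(I)}`, as a family of
coefficients indexed by the Haar support `τ(s)`. -/
def rearrCoef (τ : DyadicI → DyadicI) (p : ℝ) (s : Finset DyadicI) (x : DyadicI → X) :
    DyadicI → X :=
  fun J => ∑ I ∈ s, if τ I = J then ((len I / len (τ I)) ^ (1 / p)) • x I else 0

/-- The scalar dyadic square function `S(f) = (∑_I a_I² 1_I)^{1/2}`
of `f = ∑_{I ∈ s} a_I h_I`. -/
def sqFnS (s : Finset DyadicI) (a : DyadicI → ℝ) (t : ℝ) : ℝ :=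
  Real.sqrt (∑ I ∈ s, a I ^ 2 * Set.indicator (toSet I) (fun _ => (1 : ℝ)) t)

/-- The scalar dyadic `H^p` (quasi-)norm `‖f‖_{H^p} = ‖S(f)‖_{L^p[0,1]}`. -/
def HpNormS (p : ℝ) (s : Finset DyadicI) (a : DyadicI → ℝ) : ℝ :=
  (∫ t in Set.Icc (0 : ℝ) 1, sqFnS s a t ^ p) ^ (1 / p)

/-- The coefficients of the scalar rearrangement operator `T_{τ,p}` applied to
`f = ∑_{I ∈ s} a_I h_I`; `T_{τ,p}` is determined by
`T_{τ,p}(h_I/|I|^{1/p}) = h_{τ(I)}/|τ(I)|^{1/p}`. -/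
def rearrCoefS (τ : DyadicI → DyadicI) (p : ℝ) (s : Finset DyadicI) (a : DyadicI → ℝ) :
    DyadicI → ℝ :=
  fun J => ∑ I ∈ s, if τ I = J then ((len I / len (τ I)) ^ (1 / p)) * a I else 0

/-- The operator norm `‖T_{τ,p} ⊗ Id_X : H^p_X → H^p_X‖ ∈ [0,∞]`, computed as the
supremum over finitely supported `f` in the unit ball of `H^p_X`. -/
def hpOpNorm (τ : DyadicI → DyadicI) (p : ℝ) (X : Type*) [NormedAddCommGroup X]
    [NormedSpace ℝ X] : ℝ≥0∞ :=
  ⨆ (s : Finset DyadicI) (x : DyadicI → X) (_ : HpNormV p s x ≤ 1),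
    ENNReal.ofReal (HpNormV p (s.image τ) (rearrCoef τ p s x))

/-- The scalar operator norm `‖T_{τ,p} : H^p → H^p‖ ∈ [0,∞]`. -/
def hpOpNormS (τ : DyadicI → DyadicI) (p : ℝ) : ℝ≥0∞ :=
  ⨆ (s : Finset DyadicI) (a : DyadicI → ℝ) (_ : HpNormS p s a ≤ 1),
    ENNReal.ofReal (HpNormS p (s.image τ) (rearrCoefS τ p s a))

/-- For `H = τ(L)` (so that `σ(J) = I` for `J = τ(I)`, `I ∈ L`), the maximal function
`μ_H(t) = sup_{J ∈ H} (|σ(J)|/|J|) 1_J(t) = sup_{I ∈ L} (|I|/|τ(I)|) 1_{τ(I)}(t)`,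
as an `[0,∞]`-valued function. -/
def muSet (τ : DyadicI → DyadicI) (L : Set DyadicI) (t : ℝ) : ℝ≥0∞ :=
  ⨆ (I : DyadicI) (_ : I ∈ L),
    ENNReal.ofReal (len I / len (τ I) * Set.indicator (toSet (τ I)) (fun _ => (1 : ℝ)) t)

/-- For `H = τ(L)` with `L` finite, the (real-valued) maximal function
`μ_H(t) = max_{I ∈ L} (|I|/|τ(I)|) 1_{τ(I)}(t)`. -/
def muFin (τ : DyadicI → DyadicI) (L : Finset DyadicI) (t : ℝ) : ℝ :=
  ((L.sup fun I =>
    Real.toNNReal (len I / len (τ I) * Set.indicator (toSet (τ I)) (fun _ => (1 : ℝ)) t) : ℝ≥0) : ℝ)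

/-- The point set `L* = ⋃_{I ∈ L} I` covered by a collection of dyadic intervals. -/
def pointSet (L : Set DyadicI) : Set ℝ := ⋃ I ∈ L, toSet I

/-- The constant `C₁ = sup_{H ⊆ τ(D), H ≠ ∅} (1/|σ(H)*|) ∫₀¹ μ_H(t) dt`, where
nonempty collections `H ⊆ τ(D)` are parametrized as `H = τ(L)` for nonempty `L ⊆ D`,
so that `σ(H)* = L*`. -/
def Cone (τ : DyadicI → DyadicI) : ℝ≥0∞ :=
  ⨆ (L : Set DyadicI) (_ : L.Nonempty),
    (∫⁻ t in Set.Icc (0 : ℝ) 1, muSet τ L t) / volume (pointSet L)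

/-- The square of the dyadic BMO norm of `g = ∑_{J ∈ s} a_J h_J`:
`‖g‖_{BMO}² = sup_{I ∈ D} (1/|I|) ∑_{J ⊆ I} a_J² |J|`. -/
def bmoSq (s : Finset DyadicI) (a : DyadicI → ℝ) : ℝ≥0∞ :=
  ⨆ I : DyadicI, ENNReal.ofReal
    ((∑ J ∈ s.filter fun J => toSet J ⊆ toSet I, a J ^ 2 * len J) / len I)

/-- The coefficients of `S_σ(g)` for `g = ∑_{J ∈ s} a_J h_J`, where `σ = τ⁻¹` on `τ(D)`:
`S_σ(h_J) = h_{σ(J)}` for `J ∈ τ(D)` and `S_σ(h_J) = 0` otherwise, so that the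
coefficient of `h_K` in `S_σ(g)` is `a_{τ(K)}` if `τ(K) ∈ s`, and `0` otherwise. -/
def sSigmaCoef (τ : DyadicI → DyadicI) (s : Finset DyadicI) (a : DyadicI → ℝ) :
    DyadicI → ℝ :=
  fun K => if τ K ∈ s then a (τ K) else 0

/-- The Haar support of `S_σ(g)` for `g` with Haar support `s`:
`σ(s ∩ τ(D))`, i.e. the preimage under `τ` of `s`. -/
def sSigmaSupp (τ : DyadicI → DyadicI) (s : Finset DyadicI) : Finset DyadicI :=
  (s.filter fun J => J ∈ Set.range τ).image (Function.invFun τ)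

/-- The operator norm `‖S_σ‖_{BMO} ∈ [0,∞]` of `S_σ` with respect to the dyadic BMO
norm, computed over finitely supported Haar expansions. -/
def bmoOpNorm (τ : DyadicI → DyadicI) : ℝ≥0∞ :=
  ⨆ (s : Finset DyadicI) (a : DyadicI → ℝ) (_ : bmoSq s a ≤ 1),
    (bmoSq (sSigmaSupp τ s) (sSigmaCoef τ s a)) ^ (1 / 2 : ℝ)

/-- The Carleson constant `⟦C⟧ = sup_{I ∈ C} (1/|I|) ∑_{J ∈ C, J ⊆ I} |J| ∈ [0,∞]`
of a collection of dyadic intervals. -/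
def carleson (C : Set DyadicI) : ℝ≥0∞ :=
  ⨆ (I : DyadicI) (_ : I ∈ C),
    (∑' J : {J : DyadicI // J ∈ C ∧ toSet J ⊆ toSet I}, ENNReal.ofReal (len J.1)) /
      ENNReal.ofReal (len I)

/-- The `L^p_X = L^p([0,1]; X)` (Bochner) norm of `f = ∑_{I ∈ s} x_I h_I`. -/
def LpNormV (p : ℝ) (s : Finset DyadicI) (x : DyadicI → X) : ℝ :=
  (∫ t in Set.Icc (0 : ℝ) 1, ‖∑ I ∈ s, haar I t • x I‖ ^ p) ^ (1 / p)

/-- The operator norm `‖T_{τ,p} ⊗ Id_X : L^p_X → L^p_X‖ ∈ [0,∞]`, computed over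
finitely supported Haar expansions. -/
def lpOpNorm (τ : DyadicI → DyadicI) (p : ℝ) (X : Type*) [NormedAddCommGroup X]
    [NormedSpace ℝ X] : ℝ≥0∞ :=
  ⨆ (s : Finset DyadicI) (x : DyadicI → X) (_ : LpNormV p s x ≤ 1),
    ENNReal.ofReal (LpNormV p (s.image τ) (rearrCoef τ p s x))

/-- The operator norm `‖T_{τ,p}^{-1} ⊗ Id_X‖ ∈ [0,∞]` on the span of
`{h_J : J ∈ τ(D)}` with the `L^p_X` norm: the map determined by
`x h_{τ(I)}/|τ(I)|^{1/p} ↦ x h_I/|I|^{1/p}`, i.e. sending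
`g = ∑_{I ∈ L} x_I h_{τ(I)}` to `∑_{I ∈ L} (|τ(I)|/|I|)^{1/p} x_I h_I`. -/
def lpInvOpNorm (τ : DyadicI → DyadicI) (p : ℝ) (X : Type*) [NormedAddCommGroup X]
    [NormedSpace ℝ X] : ℝ≥0∞ :=
  ⨆ (L : Finset DyadicI) (x : DyadicI → X)
    (_ : LpNormV p (L.image τ) (fun J => ∑ I ∈ L, if τ I = J then x I else 0) ≤ 1),
    ENNReal.ofReal (LpNormV p L fun I => ((len (τ I) / len I) ^ (1 / p)) • x I)

/-- The operator norm `‖T_{τ,1}^{-1}‖₁ ∈ [0,∞]` on the span of `{h_J : J ∈ τ(D)}`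
with the dyadic `H¹` norm: the map determined by `h_{τ(I)}/|τ(I)| ↦ h_I/|I|`,
i.e. sending `g = ∑_{I ∈ L} a_I h_{τ(I)}` to `∑_{I ∈ L} (|τ(I)|/|I|) a_I h_I`. -/
def h1InvOpNorm (τ : DyadicI → DyadicI) : ℝ≥0∞ :=
  ⨆ (L : Finset DyadicI) (a : DyadicI → ℝ)
    (_ : HpNormS 1 (L.image τ) (fun J => ∑ I ∈ L, if τ I = J then a I else 0) ≤ 1),
    ENNReal.ofReal (HpNormS 1 L fun I => (len (τ I) / len I) * a I)

/-- The Rademacher average `(E_ε ‖∑_{i<n} ε_i a_i‖^p)^{1/p}` over all choices of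
signs `ε_i ∈ {±1}`. -/
def radAvg (p : ℝ) {Y : Type*} [NormedAddCommGroup Y] [NormedSpace ℝ Y] (n : ℕ)
    (a : Fin n → Y) : ℝ :=
  ((∑ ε : Fin n → Bool, ‖∑ i, (if ε i then (1 : ℝ) else -1) • a i‖ ^ p) / 2 ^ n) ^ (1 / p)

/-- The type-`p` constant `Type_p(Y) ∈ [0,∞]`: the least `C` such that
`(E_ε ‖∑ ε_i a_i‖^p)^{1/p} ≤ C (∑ ‖a_i‖^p)^{1/p}` for all finite families in `Y`. -/
def typeConst (p : ℝ) (Y : Type*) [NormedAddCommGroup Y] [NormedSpace ℝ Y] : ℝ≥0∞ :=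
  sInf {C : ℝ≥0∞ | ∀ (n : ℕ) (a : Fin n → Y),
    ENNReal.ofReal (radAvg p n a) ≤ C * ENNReal.ofReal ((∑ i, ‖a i‖ ^ p) ^ (1 / p))}

/-- The UMD property of a Banach space `E`: for each `1 < r < ∞` the Haar system is
unconditional in `L^r_E`. -/
def IsUMD (E : Type*) [NormedAddCommGroup E] [NormedSpace ℝ E] : Prop :=
  ∀ r : ℝ, 1 < r → ∃ β : ℝ, ∀ (s : Finset DyadicI) (x : DyadicI → E) (ε : DyadicI → ℝ),
    (∀ I, ε I = 1 ∨ ε I = -1) →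
    LpNormV r s (fun I => ε I • x I) ≤ β * LpNormV r s x

/-- `B` is a block in `L` with top `I`: `B ⊆ L`, `I` is the unique maximal interval
of `B`, and `B` is order-convex in `L` between its elements and `I`. -/
def IsBlock (L : Set DyadicI) (B : Set DyadicI) (I : DyadicI) : Prop :=
  B ⊆ L ∧ I ∈ B ∧ (∀ J ∈ B, toSet J ⊆ toSet I) ∧
    ∀ J ∈ B, ∀ K ∈ L, toSet J ⊆ toSet K → toSet K ⊆ toSet I → K ∈ B

/-- `G₁(K | E)`: the maximal dyadic intervals of `E` strictly contained in `K`. -/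
def gen1 (K : DyadicI) (E : Set DyadicI) : Set DyadicI :=
  {J | J ∈ E ∧ toSet J ⊂ toSet K ∧
    ∀ J' ∈ E, toSet J' ⊂ toSet K → toSet J ⊆ toSet J' → J' = J}

end Defs


section Helpers

variable {X : Type*} [NormedAddCommGroup X] [NormedSpace ℝ X]

/-- Rademacher `L²` average of a finite family. -/
def radF {ι : Type*} [Fintype ι] (v : ι → X) : ℝ :=
  Real.sqrt ((∑ ε : ι → Bool, ‖∑ i, (if ε i then (1 : ℝ) else -1) • v i‖ ^ 2) /
      2 ^ Fintype.card ι)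

lemma sqFn_eq_radF (s : Finset DyadicI) (x : DyadicI → X) (t : ℝ) :
    sqFn s x t = radF (fun I : {I // I ∈ s} => haar I.1 t • x I.1) := by
  unfold sqFn radF
  simp only [mul_smul, Finset.univ_eq_attach, Fintype.card_coe]
  congr!

/-- The vector in `ℓ²` behind `radF`. -/
def radVec {ι : Type*} [Fintype ι] (v : ι → X) : PiLp 2 (fun _ : ι → Bool => X) :=
  WithLp.toLp 2 (fun ε => ∑ i, (if ε i then (1 : ℝ) else -1) • v i)

lemma radF_eq_norm {ι : Type*} [Fintype ι] (v : ι → X) :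
    radF v = ‖radVec v‖ / Real.sqrt (2 ^ Fintype.card ι) := by
  unfold radF radVec
  rw [PiLp.norm_eq_of_L2, Real.sqrt_div (by positivity)]

lemma radVec_add {ι : Type*} [Fintype ι] (v w : ι → X) :
    radVec (v + w) = radVec v + radVec w := by
  ext ε
  simp [radVec, Finset.sum_add_distrib]

lemma radVec_smul {ι : Type*} [Fintype ι] (c : ℝ) (v : ι → X) :
    radVec (c • v) = c • radVec v := by
  ext ε
  simp only [radVec, Pi.smul_apply, PiLp.smul_apply, Finset.smul_sum]
  exact Finset.sum_congr rfl fun i _ => smul_comm _ _ _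

lemma radF_nonneg {ι : Type*} [Fintype ι] (v : ι → X) : 0 ≤ radF v := Real.sqrt_nonneg _

lemma radF_add_le {ι : Type*} [Fintype ι] (v w : ι → X) :
    radF (v + w) ≤ radF v + radF w := by
  simp only [radF_eq_norm, radVec_add, ← add_div]
  gcongr
  exact norm_add_le _ _

lemma radF_smul {ι : Type*} [Fintype ι] (c : ℝ) (v : ι → X) :
    radF (c • v) = |c| * radF v := by
  simp only [radF_eq_norm, radVec_smul, norm_smul, Real.norm_eq_abs, mul_div_assoc]

lemma radF_zero {ι : Type*} [Fintype ι] : radF (0 : ι → X) = 0 := by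
  simp [radF]

lemma radF_sum_le {ι κ : Type*} [Fintype ι] (N : Finset κ) (v : κ → ι → X) :
    radF (∑ n ∈ N, v n) ≤ ∑ n ∈ N, radF (v n) := by
  induction N using Finset.induction_on with
  | empty => simp [radF_zero]
  | insert a N ha ih =>
    rw [Finset.sum_insert ha, Finset.sum_insert ha]
    exact (radF_add_le _ _).trans (by gcongr)

lemma radF_sign {ι : Type*} [Fintype ι] (η : ι → ℝ) (hη : ∀ i, η i = 1 ∨ η i = -1)
    (v : ι → X) : radF (fun i => η i • v i) = radF v := by
  unfold radF
  congr 2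
  let e : (ι → Bool) ≃ (ι → Bool) :=
    Equiv.piCongrRight fun i => if η i = 1 then Equiv.refl Bool else Equiv.boolNot
  refine Fintype.sum_equiv e _ _ fun ε => ?_
  congr 2
  refine Finset.sum_congr rfl fun i _ => ?_
  rw [smul_smul]
  congr 1
  rcases hη i with h | h
  · simp [e, h]
  · have : ¬ ((-1 : ℝ) = 1) := by norm_num
    simp only [e, Equiv.piCongrRight_apply, Pi.map_apply, h, if_neg this]
    cases ε i <;> simp

lemma radF_contr_one {ι : Type*} [Fintype ι] (a : ι → ℝ) (ha : ∀ i, |a i| ≤ 1)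
    (v : ι → X) : radF (fun i => a i • v i) ≤ radF v := by
  have hconv : Convex ℝ {a : ι → ℝ | radF (fun i => a i • v i) ≤ radF v} := by
    intro a ha b hb c d hc hd hcd
    simp only [Set.mem_ofPred_eq] at *
    have : (fun i => (c • a + d • b) i • v i)
        = c • (fun i => a i • v i) + d • (fun i => b i • v i) := by
      ext i; simp [add_smul, mul_smul]
    rw [this]
    refine (radF_add_le _ _).trans ?_
    rw [radF_smul, radF_smul, abs_of_nonneg hc, abs_of_nonneg hd]
    calc c * radF _ + d * radF _ ≤ c * radF v + d * radF v := by gcongr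
      _ = radF v := by rw [← add_mul, hcd, one_mul]
  have hsub : Set.pi Set.univ (fun _ : ι => ({-1, 1} : Set ℝ))
      ⊆ {a : ι → ℝ | radF (fun i => a i • v i) ≤ radF v} := by
    intro η hη
    refine (radF_sign η (fun i => ?_) v).le
    have := hη i (Set.mem_univ i)
    simp only [Set.mem_insert_iff, Set.mem_singleton_iff] at this
    tauto
  have := convexHull_min hsub hconv
  apply this
  rw [convexHull_pi]
  intro i _
  rw [convexHull_pair, segment_eq_Icc (by norm_num)]
  exact abs_le.mp (ha i)

lemma radF_contr {ι : Type*} [Fintype ι] (C : ℝ) (hC : 0 ≤ C) (u v : ι → X)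
    (h : ∀ i, ∃ c : ℝ, |c| ≤ C ∧ u i = c • v i) : radF u ≤ C * radF v := by
  choose c hc huv using h
  have h1 : u = C • (fun i => (c i / C) • v i) := by
    ext i
    rw [huv]
    simp only [Pi.smul_apply, smul_smul]
    rcases hC.eq_or_lt with rfl | hC
    · have : c i = 0 := abs_eq_zero.mp (le_antisymm (hc i) (abs_nonneg _))
      simp [this]
    · rw [mul_div_cancel₀ _ hC.ne']
  rw [h1, radF_smul, abs_of_nonneg hC]
  gcongr
  refine radF_contr_one _ (fun i => ?_) v
  rw [abs_div, abs_of_nonneg hC]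
  exact div_le_one_of_le₀ (hc i) hC

lemma radF_single {ι : Type*} [Fintype ι] (v : ι → X) (i : ι) : ‖v i‖ ≤ radF v := by
  have h1 : radF (fun j => if j = i then v i else 0) ≤ 1 * radF v := by
    refine radF_contr 1 zero_le_one _ _ fun j => ?_
    by_cases h : j = i
    · exact ⟨1, by simp, by simp [h]⟩
    · exact ⟨0, by simp, by simp [h]⟩
  have h2 : radF (fun j => if j = i then v i else 0) = ‖v i‖ := by
    unfold radF
    have : ∀ ε : ι → Bool, ‖∑ j, (if ε j then (1 : ℝ) else -1) • (if j = i then v i else 0)‖ ^ 2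
        = ‖v i‖ ^ 2 := by
      intro ε
      congr 1
      simp only [smul_ite, smul_zero, Finset.sum_ite_eq', Finset.mem_univ, if_true]
      cases ε i <;> simp
    simp only [this]
    simp
  linarith

lemma radF_le_sum {ι : Type*} [Fintype ι] (v : ι → X) : radF v ≤ ∑ i, ‖v i‖ := by
  have h : v = ∑ i, (fun j => if j = i then v i else 0) := by
    ext j; simp [Finset.sum_apply]
  unfold radF
  apply Real.sqrt_le_iff.mpr
  refine ⟨by positivity, ?_⟩
  rw [div_le_iff₀ (by positivity)]
  calc _ ≤ ∑ ε : ι → Bool, (∑ i, ‖v i‖) ^ 2 := by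
        gcongr with ε
        refine (norm_sum_le _ _).trans (Finset.sum_le_sum fun i _ => ?_)
        rw [norm_smul]
        cases ε i <;> simp
    _ = _ := by simp [mul_comm]

/-! Dyadic geometry -/

lemma len_pos' (I : DyadicI) : 0 < I.len := by unfold len; positivity

lemma mem_toSet_iff (I : DyadicI) (t : ℝ) :
    t ∈ toSet I ↔ ⌊t * 2 ^ I.n⌋ = (I.k : ℤ) := by
  rw [Int.floor_eq_iff]
  unfold toSet lep len
  have h2 : (0 : ℝ) < 2 ^ I.n := by positivity
  rw [Set.mem_Ico, zpow_neg, zpow_natCast, ← div_eq_mul_inv, div_le_iff₀ h2,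
    ← one_div, ← add_div, lt_div_iff₀ h2]
  simp

lemma toSet_subset_of {I J : DyadicI} {t : ℝ} (hI : t ∈ toSet I) (hJ : t ∈ toSet J)
    (h : J.n ≤ I.n) : toSet I ⊆ toSet J := by
  intro u hu
  rw [mem_toSet_iff] at *
  have key : ∀ z : ℝ, ⌊z * 2 ^ J.n⌋ = ⌊z * 2 ^ I.n⌋ / ((2 ^ (I.n - J.n) : ℕ) : ℤ) := by
    intro z
    rw [← Int.floor_div_natCast]
    congr 1
    push_cast
    rw [eq_div_iff (by positivity), mul_assoc, ← pow_add]
    congr 2; omega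
  rw [key, hu, ← hI, ← key, hJ]

lemma toSet_subset_unit (I : DyadicI) : toSet I ⊆ Set.Icc 0 1 := by
  intro t ht
  unfold toSet lep len at ht
  have h2 : (0 : ℝ) < 2 ^ I.n := by positivity
  rw [Set.mem_Ico, zpow_neg, zpow_natCast, ← div_eq_mul_inv, 
    ← one_div, ← add_div, lt_div_iff₀ h2] at ht
  have hk : (I.k : ℝ) + 1 ≤ 2 ^ I.n := by exact_mod_cast I.hk
  refine ⟨le_trans (by positivity) ht.1, ?_⟩
  have := ht.2
  by_contra hcon
  push Not at hcon
  nlinarith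

lemma haar_abs_le (I : DyadicI) (t : ℝ) : |haar I t| ≤ 1 := by
  unfold haar; split_ifs <;> simp

lemma haar_of_mem {I : DyadicI} {t : ℝ} (h : t ∈ toSet I) : |haar I t| = 1 := by
  unfold haar
  unfold toSet at h
  have := len_pos' I
  split_ifs with h1 h2
  · simp
  · simp
  · exfalso
    simp only [Set.mem_Ico, not_and, not_lt] at *
    linarith [h1 h.1, h2 (h1 h.1)]

lemma haar_of_not_mem {I : DyadicI} {t : ℝ} (h : t ∉ toSet I) : haar I t = 0 := by
  unfold haar
  unfold toSet at h
  have := len_pos' I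
  rw [if_neg, if_neg]
  · intro h1; exact h ⟨by linarith [h1.1], h1.2⟩
  · intro h1; exact h ⟨h1.1, by linarith [h1.2]⟩

lemma measurable_haar (I : DyadicI) : Measurable (haar I) := by
  unfold haar
  exact Measurable.ite measurableSet_Ico measurable_const
    (Measurable.ite measurableSet_Ico measurable_const measurable_const)

lemma sqFn_nonneg (s : Finset DyadicI) (x : DyadicI → X) (t : ℝ) : 0 ≤ sqFn s x t :=
  Real.sqrt_nonneg _

lemma measurable_sqFn (s : Finset DyadicI) (x : DyadicI → X) : Measurable (sqFn s x) := by
  unfold sqFn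
  refine Measurable.sqrt (Measurable.div_const (Finset.measurable_sum _ fun ε _ => ?_) _)
  refine Measurable.pow_const ?_ 2
  refine (StronglyMeasurable.norm (Finset.stronglyMeasurable_fun_sum _ fun I _ => ?_)).measurable
  exact ((measurable_const.mul (measurable_haar I.1)).stronglyMeasurable).smul_const _

lemma sqFn_bdd (s : Finset DyadicI) (x : DyadicI → X) (t : ℝ) :
    sqFn s x t ≤ ∑ I : {I // I ∈ s}, ‖x I.1‖ := by
  rw [sqFn_eq_radF]
  refine (radF_le_sum _).trans (Finset.sum_le_sum fun I _ => ?_)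
  rw [norm_smul]
  exact mul_le_of_le_one_left (norm_nonneg _) (haar_abs_le _ _)

lemma integrable_sqFn_rpow (p : ℝ) (hp : 0 < p) (s : Finset DyadicI) (x : DyadicI → X) :
    Integrable (fun t => sqFn s x t ^ p) (volume.restrict (Set.Icc (0 : ℝ) 1)) := by
  refine Integrable.of_bound ((measurable_sqFn s x).pow_const p).aestronglyMeasurable
    ((∑ I : {I // I ∈ s}, ‖x I.1‖) ^ p) (Filter.Eventually.of_forall fun t => ?_)
  rw [Real.norm_of_nonneg (Real.rpow_nonneg (sqFn_nonneg _ _ _) _)]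
  exact Real.rpow_le_rpow (sqFn_nonneg _ _ _) (sqFn_bdd _ _ _) hp.le

lemma ofReal_HpNormV (p : ℝ) (hp : 0 < p) (s : Finset DyadicI) (x : DyadicI → X) :
    ENNReal.ofReal (HpNormV p s x)
      = (∫⁻ t in Set.Icc (0 : ℝ) 1, ENNReal.ofReal (sqFn s x t) ^ p) ^ (1 / p) := by
  unfold HpNormV
  rw [← ENNReal.ofReal_rpow_of_nonneg
    (integral_nonneg fun t => Real.rpow_nonneg (sqFn_nonneg _ _ _) _) (by positivity),
    ofReal_integral_eq_lintegral_ofReal (integrable_sqFn_rpow p hp s x)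
      (Filter.Eventually.of_forall fun t => Real.rpow_nonneg (sqFn_nonneg _ _ _) _)]
  congr 1
  refine lintegral_congr fun t => ?_
  rw [ENNReal.ofReal_rpow_of_nonneg (sqFn_nonneg _ _ _) hp.le]

lemma HpNormV_le_one_iff (p : ℝ) (hp : 0 < p) (s : Finset DyadicI) (x : DyadicI → X) :
    HpNormV p s x ≤ 1 ↔
      ∫⁻ t in Set.Icc (0 : ℝ) 1, ENNReal.ofReal (sqFn s x t) ^ p ≤ 1 := by
  rw [← ENNReal.ofReal_le_one, ofReal_HpNormV p hp]
  nth_rewrite 1 [← ENNReal.one_rpow (1 / p)]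
  exact ENNReal.rpow_le_rpow_iff (by positivity)

lemma geom_bound (α : ℝ) (hα : 0 < α) (N : Finset ℤ) (S : ℝ) :
    ∑ n ∈ N with (2 : ℝ) ^ n ≤ S, ((2 : ℝ) ^ n) ^ α ≤ max S 0 ^ α / (1 - 2 ^ (-α)) := by
  have hr1 : (2 : ℝ) ^ (-α) < 1 := Real.rpow_lt_one_of_one_lt_of_neg (by norm_num) (by linarith)
  have hr0 : (0 : ℝ) ≤ 2 ^ (-α) := by positivity
  have hden : 0 < 1 - (2 : ℝ) ^ (-α) := by linarith
  by_cases hS : 0 < S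
  · set m := Int.log 2 S
    have hm : (2 : ℝ) ^ m ≤ S := by
      have := Int.zpow_log_le_self (b := 2) (by norm_num) hS
      exact_mod_cast this
    have hle : ∀ n ∈ N.filter (fun n => (2 : ℝ) ^ n ≤ S), n ≤ m := by
      intro n hn
      rw [Finset.mem_filter] at hn
      refine (Int.zpow_le_iff_le_log (b := 2) (by norm_num) hS).mp ?_
      exact_mod_cast hn.2
    have hterm : ∀ n ∈ N.filter (fun n => (2 : ℝ) ^ n ≤ S),
        ((2 : ℝ) ^ n) ^ α = ((2 : ℝ) ^ m) ^ α * (2 ^ (-α)) ^ (m - n).toNat := by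
      intro n hn
      have h := hle n hn
      rw [← Real.rpow_intCast, ← Real.rpow_intCast, ← Real.rpow_mul (by norm_num),
        ← Real.rpow_mul (by norm_num), ← Real.rpow_natCast, ← Real.rpow_mul (by norm_num),
        ← Real.rpow_add (by norm_num)]
      congr 1
      have : (((m - n).toNat : ℕ) : ℝ) = (m : ℝ) - n := by
        have h' : (((m - n).toNat : ℕ) : ℤ) = m - n := Int.toNat_of_nonneg (by omega)
        exact_mod_cast congrArg (fun z : ℤ => (z : ℝ)) h'
      rw [this]; ring
    rw [Finset.sum_congr rfl hterm, ← Finset.mul_sum, max_eq_left hS.le, div_eq_mul_inv,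
      ← tsum_geometric_of_lt_one hr0 hr1]
    have hinj : Set.InjOn (fun n : ℤ => (m - n).toNat)
        (N.filter (fun n => (2 : ℝ) ^ n ≤ S)) := by
      intro a ha b hb hab
      have h1 := hle a ha
      have h2 := hle b hb
      simp only at hab
      omega
    have := Finset.sum_image (f := fun k : ℕ => ((2 : ℝ) ^ (-α)) ^ k) hinj
    rw [← this]
    gcongr
    exact (summable_geometric_of_lt_one hr0 hr1).sum_le_tsum _ (fun _ _ => by positivity)
  · have : N.filter (fun n => (2 : ℝ) ^ n ≤ S) = ∅ := by
      refine Finset.filter_eq_empty_iff.mpr fun n _ h => hS (lt_of_lt_of_le ?_ h)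
      positivity
    rw [this, Finset.sum_empty]
    positivity

lemma sqFn_smul (c : ℝ) (s : Finset DyadicI) (x : DyadicI → X) (t : ℝ) :
    sqFn s (fun I => c • x I) t = |c| * sqFn s x t := by
  rw [sqFn_eq_radF, sqFn_eq_radF, ← radF_smul]
  congr 1
  ext I
  exact smul_comm _ _ _

/-- The predictable square function along the branch above `I`. -/
def branchS (s : Finset DyadicI) (x : DyadicI → X) (I : DyadicI) : ℝ :=
  radF (fun J : {J // J ∈ s} => if toSet I ⊆ toSet J.1 then x J.1 else 0)

/-- The dyadic level of `I`. -/
def lv (s : Finset DyadicI) (x : DyadicI → X) (I : DyadicI) : ℤ := Int.log 2 (branchS s x I)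

/-- The intervals of level `n`. -/
def Dlev (s : Finset DyadicI) (x : DyadicI → X) (n : ℤ) : Finset DyadicI :=
  s.filter fun I => 0 < branchS s x I ∧ lv s x I = n

/-- The occurring levels. -/
def levels (s : Finset DyadicI) (x : DyadicI → X) : Finset ℤ :=
  (s.filter fun I => 0 < branchS s x I).image (lv s x)

lemma branchS_le (s : Finset DyadicI) (x : DyadicI → X) {I : DyadicI} {t : ℝ}
    (ht : t ∈ toSet I) : branchS s x I ≤ sqFn s x t := by
  rw [sqFn_eq_radF, ← one_mul (radF _)]
  refine radF_contr 1 zero_le_one _ _ fun J => ?_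
  by_cases h : toSet I ⊆ toSet J.1
  · refine ⟨haar J.1 t, haar_abs_le _ _, ?_⟩
    have h1 := haar_of_mem (h ht)
    rw [if_pos h, smul_smul, ← abs_mul_abs_self, h1]
    simp
  · exact ⟨0, by simp, by simp [h]⟩

lemma norm_le_branchS (s : Finset DyadicI) (x : DyadicI → X) {I : DyadicI} (hI : I ∈ s) :
    ‖x I‖ ≤ branchS s x I := by
  have := radF_single (fun J : {J // J ∈ s} => if toSet I ⊆ toSet J.1 then x J.1 else 0) ⟨I, hI⟩
  simpa [branchS] using this

lemma mem_Dlev_or (s : Finset DyadicI) (x : DyadicI → X) {I : DyadicI} (hI : I ∈ s) :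
    x I = 0 ∨ (lv s x I ∈ levels s x ∧ I ∈ Dlev s x (lv s x I)) := by
  have h := norm_le_branchS s x hI
  by_cases h0 : 0 < branchS s x I
  · right
    refine ⟨Finset.mem_image_of_mem _ (Finset.mem_filter.mpr ⟨hI, h0⟩), ?_⟩
    exact Finset.mem_filter.mpr ⟨hI, h0, rfl⟩
  · left
    exact norm_le_zero_iff.mp (h.trans (not_lt.mp h0))

lemma zpow_le_of_mem (s : Finset DyadicI) (x : DyadicI → X) {n : ℤ} {I : DyadicI} {t : ℝ}
    (hI : I ∈ Dlev s x n) (ht : t ∈ toSet I) : (2 : ℝ) ^ n ≤ sqFn s x t := by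
  obtain ⟨_, h0, rfl⟩ := Finset.mem_filter.mp hI
  refine le_trans ?_ (branchS_le s x ht)
  exact_mod_cast Int.zpow_log_le_self (b := 2) (by norm_num) h0

lemma sqFn_level_le (s : Finset DyadicI) (x : DyadicI → X) (n : ℤ) (t : ℝ) :
    sqFn s (fun I => if I ∈ Dlev s x n then x I else 0) t
      ≤ if (2 : ℝ) ^ n ≤ sqFn s x t then 2 * (2 : ℝ) ^ n else 0 := by
  by_cases hne : ((Dlev s x n).filter fun I => t ∈ toSet I).Nonempty
  · obtain ⟨I, hI, hmax⟩ := Finset.exists_max_image _ (fun I : DyadicI => I.n) hne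
    rw [Finset.mem_filter] at hI
    rw [if_pos (zpow_le_of_mem s x hI.1 hI.2)]
    have h1 : sqFn s (fun I => if I ∈ Dlev s x n then x I else 0) t ≤ 1 * branchS s x I := by
      rw [sqFn_eq_radF]
      refine radF_contr 1 zero_le_one _ _ fun J => ?_
      by_cases hJ : J.1 ∈ Dlev s x n ∧ t ∈ toSet J.1
      · refine ⟨haar J.1 t, haar_abs_le _ _, ?_⟩
        have := toSet_subset_of hI.2 hJ.2 (hmax J.1 (Finset.mem_filter.mpr hJ))
        rw [if_pos this, if_pos hJ.1]
      · refine ⟨0, by simp, ?_⟩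
        by_cases h : J.1 ∈ Dlev s x n
        · rw [haar_of_not_mem (fun h' => hJ ⟨h, h'⟩)]; simp
        · simp [h]
    obtain ⟨_, h0, hn⟩ := Finset.mem_filter.mp hI.1
    have h2 : branchS s x I < (2 : ℝ) ^ (n + 1) := by
      rw [← hn]
      exact_mod_cast Int.lt_zpow_succ_log_self (b := 2) (by norm_num) (branchS s x I)
    rw [zpow_add_one₀ (by norm_num)] at h2
    linarith
  · have h1 : sqFn s (fun I => if I ∈ Dlev s x n then x I else 0) t = 0 := by
      rw [sqFn_eq_radF, ← radF_zero (X := X) (ι := {I // I ∈ s})]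
      congr 1
      ext J
      by_cases h : J.1 ∈ Dlev s x n
      · rw [haar_of_not_mem (fun h' => hne ⟨J.1, Finset.mem_filter.mpr ⟨h, h'⟩⟩)]; simp
      · simp [h]
    rw [h1]
    split_ifs
    · positivity
    · rfl

lemma sqFn_weight_le (s : Finset DyadicI) (x : DyadicI → X) (α : ℝ) (hα : 0 < α) (t : ℝ) :
    sqFn s (fun I => ((2 : ℝ) ^ lv s x I) ^ (α - 1) • x I) t
      ≤ 2 / (1 - 2 ^ (-α)) * sqFn s x t ^ α := by
  have h1 : sqFn s (fun I => ((2 : ℝ) ^ lv s x I) ^ (α - 1) • x I) t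
      ≤ ∑ n ∈ levels s x, ((2 : ℝ) ^ n) ^ (α - 1) *
          sqFn s (fun I => if I ∈ Dlev s x n then x I else 0) t := by
    have h2 : ∀ n ∈ levels s x, ((2 : ℝ) ^ n) ^ (α - 1) *
          sqFn s (fun I => if I ∈ Dlev s x n then x I else 0) t
        = radF (fun J : {J // J ∈ s} => haar J.1 t • ((2 : ℝ) ^ n) ^ (α - 1) •
            (if J.1 ∈ Dlev s x n then x J.1 else 0)) := by
      intro n _
      rw [← abs_of_nonneg (show 0 ≤ ((2 : ℝ) ^ n) ^ (α - 1) by positivity), ← sqFn_smul,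
        sqFn_eq_radF, abs_of_nonneg (show 0 ≤ ((2 : ℝ) ^ n) ^ (α - 1) by positivity)]
    rw [Finset.sum_congr rfl h2, sqFn_eq_radF]
    refine le_trans (le_of_eq ?_) (radF_sum_le _ _)
    congr 1
    ext J
    rw [Finset.sum_apply, ← Finset.smul_sum]
    congr 1
    rcases mem_Dlev_or s x J.2 with h | ⟨h, h'⟩
    · simp [h]
    · rw [Finset.sum_eq_single_of_mem _ h, if_pos h']
      intro n _ hn
      rw [if_neg, smul_zero]
      intro hm
      exact hn (Finset.mem_filter.mp hm).2.2.symm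
  refine h1.trans ?_
  calc _ ≤ ∑ n ∈ levels s x, ((2 : ℝ) ^ n) ^ (α - 1) *
        (if (2 : ℝ) ^ n ≤ sqFn s x t then 2 * (2 : ℝ) ^ n else 0) := by
        gcongr with n _
        exact sqFn_level_le s x n t
    _ = 2 * ∑ n ∈ levels s x with (2 : ℝ) ^ n ≤ sqFn s x t, ((2 : ℝ) ^ n) ^ α := by
        rw [Finset.sum_filter, Finset.mul_sum]
        refine Finset.sum_congr rfl fun n _ => ?_
        split_ifs
        · have : (0 : ℝ) < 2 ^ n := by positivity
          rw [Real.rpow_sub_one this.ne']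
          field_simp
        · simp
    _ ≤ 2 * (max (sqFn s x t) 0 ^ α / (1 - 2 ^ (-α))) := by
        gcongr
        exact geom_bound α hα _ _
    _ = _ := by
        rw [max_eq_left (sqFn_nonneg _ _ _)]; ring

lemma measurable_muSet (τ : DyadicI → DyadicI) (L : Finset DyadicI) :
    Measurable (muSet τ (L : Set DyadicI)) := by
  unfold muSet
  refine Measurable.biSup _ L.finite_toSet.countable fun I _ => ?_
  refine ENNReal.measurable_ofReal.comp (measurable_const.mul ?_)
  exact measurable_const.indicator measurableSet_Ico

lemma muSet_lt_top (τ : DyadicI → DyadicI) (L : Finset DyadicI) (t : ℝ) :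
    muSet τ (L : Set DyadicI) t < ∞ := by
  unfold muSet
  refine lt_of_le_of_lt (b := ∑ I ∈ L, ENNReal.ofReal
    (len I / len (τ I) * Set.indicator (toSet (τ I)) (fun _ => (1 : ℝ)) t)) ?_ ?_
  · refine iSup₂_le fun I hI => ?_
    exact Finset.single_le_sum (f := fun I => ENNReal.ofReal
      (len I / len (τ I) * Set.indicator (toSet (τ I)) (fun _ => (1 : ℝ)) t))
      (fun _ _ => zero_le) (Finset.mem_coe.mp hI)
  · exact ENNReal.sum_lt_top.mpr fun _ _ => ENNReal.ofReal_lt_top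

lemma lintegral_muSet_le (τ : DyadicI → DyadicI) (L : Set DyadicI) (hL : L.Nonempty) :
    ∫⁻ t in Set.Icc (0 : ℝ) 1, muSet τ L t ≤ Cone τ * volume (pointSet L) := by
  obtain ⟨I, hI⟩ := hL
  have h0 : volume (pointSet L) ≠ 0 := by
    have h1 : volume (toSet I) ≤ volume (pointSet L) :=
      measure_mono (Set.subset_biUnion_of_mem (u := fun I => toSet I) hI)
    have h2 : 0 < volume (toSet I) := by
      unfold toSet
      rw [Real.volume_Ico]
      have := len_pos' I
      simpa using this
    exact (h2.trans_le h1).ne'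
  have h1 : volume (pointSet L) ≠ ∞ := by
    have : volume (pointSet L) ≤ volume (Set.Icc (0 : ℝ) 1) :=
      measure_mono (Set.iUnion₂_subset fun I _ => toSet_subset_unit I)
    refine (this.trans_lt ?_).ne
    rw [Real.volume_Icc]; exact ENNReal.ofReal_lt_top
  rw [← ENNReal.div_le_iff_le_mul (Or.inl h0) (Or.inl h1)]
  unfold Cone
  exact le_iSup₂ (f := fun (L : Set DyadicI) (_ : L.Nonempty) =>
    (∫⁻ t in Set.Icc (0 : ℝ) 1, muSet τ L t) / volume (pointSet L)) L ⟨I, hI⟩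

/-- The weighted maximal function. -/
def bigM (τ : DyadicI → DyadicI) (q : ℝ) (s : Finset DyadicI) (x : DyadicI → X) (t : ℝ) : ℝ≥0∞ :=
  ∑ n ∈ levels s x, ENNReal.ofReal (((2 : ℝ) ^ n) ^ q) * muSet τ (Dlev s x n : Set DyadicI) t

lemma measurable_bigM (τ : DyadicI → DyadicI) (q : ℝ) (s : Finset DyadicI) (x : DyadicI → X) :
    Measurable (bigM τ q s x) := by
  unfold bigM
  exact Finset.measurable_sum _ fun n _ => (measurable_muSet τ _).const_mul _

lemma bigM_lt_top (τ : DyadicI → DyadicI) (q : ℝ) (s : Finset DyadicI) (x : DyadicI → X)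
    (t : ℝ) : bigM τ q s x t < ∞ :=
  ENNReal.sum_lt_top.mpr fun _ _ => ENNReal.mul_lt_top ENNReal.ofReal_lt_top (muSet_lt_top _ _ _)

lemma lintegral_bigM_le (τ : DyadicI → DyadicI) (q : ℝ) (hq : 0 < q) (s : Finset DyadicI)
    (x : DyadicI → X) :
    ∫⁻ t in Set.Icc (0 : ℝ) 1, bigM τ q s x t ≤
      Cone τ * (ENNReal.ofReal (1 / (1 - 2 ^ (-q))) *
        ∫⁻ t in Set.Icc (0 : ℝ) 1, ENNReal.ofReal (sqFn s x t) ^ q) := by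
  have hden : 0 < 1 - (2 : ℝ) ^ (-q) := by
    have : (2 : ℝ) ^ (-q) < 1 := Real.rpow_lt_one_of_one_lt_of_neg (by norm_num) (by linarith)
    linarith
  have hms : ∀ n, MeasurableSet (pointSet (Dlev s x n : Set DyadicI)) := fun n =>
    MeasurableSet.biUnion (Finset.countable_toSet _) fun I _ => measurableSet_Ico
  unfold bigM
  rw [lintegral_finsetSum _ fun n _ => (measurable_muSet τ _).const_mul _]
  calc _ ≤ ∑ n ∈ levels s x, Cone τ * (ENNReal.ofReal (((2 : ℝ) ^ n) ^ q) *
          volume (pointSet (Dlev s x n : Set DyadicI))) := by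
        refine Finset.sum_le_sum fun n hn => ?_
        rw [lintegral_const_mul _ (measurable_muSet τ _), mul_left_comm]
        gcongr
        refine lintegral_muSet_le τ _ ?_
        obtain ⟨I, hI, rfl⟩ := Finset.mem_image.mp hn
        rw [Finset.mem_filter] at hI
        exact ⟨I, Finset.mem_coe.mpr (Finset.mem_filter.mpr ⟨hI.1, hI.2, rfl⟩)⟩
    _ = Cone τ * ∫⁻ t in Set.Icc (0 : ℝ) 1, ∑ n ∈ levels s x,
          ENNReal.ofReal (((2 : ℝ) ^ n) ^ q) *
            (pointSet (Dlev s x n : Set DyadicI)).indicator 1 t := by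
        rw [← Finset.mul_sum]
        congr 1
        rw [lintegral_finsetSum _ fun n _ =>
          (measurable_one.indicator (hms n)).const_mul _]
        refine Finset.sum_congr rfl fun n _ => ?_
        rw [lintegral_const_mul _ (measurable_one.indicator (hms n)),
          lintegral_indicator_one (hms n), Measure.restrict_apply (hms n)]
        congr 2
        rw [Set.inter_eq_left.mpr]
        exact Set.iUnion₂_subset fun I _ => toSet_subset_unit I
    _ ≤ _ := by
        gcongr
        rw [← lintegral_const_mul _ ((measurable_sqFn s x).ennreal_ofReal.pow_const q)]
        refine lintegral_mono fun t => ?_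
        rw [ENNReal.ofReal_rpow_of_nonneg (sqFn_nonneg _ _ _) hq.le,
          ← ENNReal.ofReal_mul (by positivity)]
        have hg := geom_bound q hq (levels s x) (sqFn s x t)
        rw [max_eq_left (sqFn_nonneg _ _ _)] at hg
        refine le_trans ?_ (ENNReal.ofReal_le_ofReal (hg.trans (le_of_eq (by ring))))
        rw [ENNReal.ofReal_sum_of_nonneg (fun _ _ => by positivity), Finset.sum_filter]
        refine Finset.sum_le_sum fun n _ => ?_
        by_cases ht : t ∈ pointSet (Dlev s x n : Set DyadicI)
        · obtain ⟨I, hI, htI⟩ := Set.mem_iUnion₂.mp ht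
          rw [if_pos (zpow_le_of_mem s x (Finset.mem_coe.mp hI) htI)]
          simp [ht]
        · simp [ht]

lemma le_bigM (τ : DyadicI → DyadicI) (q : ℝ) (s : Finset DyadicI) (x : DyadicI → X)
    {t : ℝ} {I : DyadicI} (h : lv s x I ∈ levels s x) (h' : I ∈ Dlev s x (lv s x I))
    (ht : t ∈ toSet (τ I)) :
    ((2 : ℝ) ^ lv s x I) ^ q * (len I / len (τ I)) ≤ (bigM τ q s x t).toReal := by
  rw [← ENNReal.ofReal_le_iff_le_toReal (bigM_lt_top _ _ _ _ _).ne,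
    ENNReal.ofReal_mul (by positivity)]
  refine le_trans ?_ (Finset.single_le_sum (f := fun n => ENNReal.ofReal (((2 : ℝ) ^ n) ^ q) *
    muSet τ (Dlev s x n : Set DyadicI) t) (fun _ _ => zero_le) h)
  gcongr
  unfold muSet
  refine le_trans ?_ (le_iSup₂ (f := fun (I : DyadicI) (_ : I ∈ (Dlev s x _ : Set DyadicI)) =>
    ENNReal.ofReal (len I / len (τ I) * Set.indicator (toSet (τ I)) (fun _ => (1 : ℝ)) t)) I
    (Finset.mem_coe.mpr h'))
  simp [ht]

lemma rearrCoef_apply {τ : DyadicI → DyadicI} (hτ : Function.Injective τ) (p : ℝ)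
    (s : Finset DyadicI) (x : DyadicI → X) {I : DyadicI} (hI : I ∈ s) :
    rearrCoef τ p s x (τ I) = ((len I / len (τ I)) ^ (1 / p)) • x I := by
  unfold rearrCoef
  rw [Finset.sum_eq_single_of_mem I hI]
  · simp
  · intro J _ hJ
    rw [if_neg fun h => hJ (hτ h)]

lemma pointwise {τ : DyadicI → DyadicI} (hτ : Function.Injective τ) (q p : ℝ) (hq : 0 < q)
    (hqp : q ≤ p) (K : ℝ) (hK : 0 < K) (s : Finset DyadicI) (x : DyadicI → X) (t : ℝ) :
    sqFn (s.image τ) (rearrCoef τ q s x) t ≤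
      (K * (bigM τ q s x t).toReal ^ (1 / q - 1 / p)) *
        sqFn (s.image τ) (rearrCoef τ p s
          (fun I => K⁻¹ • ((2 : ℝ) ^ lv s x I) ^ (q / p - 1) • x I)) t := by
  have hp : 0 < p := hq.trans_le hqp
  have he : 0 ≤ 1 / q - 1 / p := by
    rw [sub_nonneg]; exact one_div_le_one_div_of_le hq hqp
  rw [sqFn_eq_radF, sqFn_eq_radF]
  refine radF_contr _ (by positivity) _ _ ?_
  rintro ⟨J, hJ⟩
  obtain ⟨I, hI, rfl⟩ := Finset.mem_image.mp hJ
  dsimp only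
  rw [rearrCoef_apply hτ _ _ _ hI, rearrCoef_apply hτ _ _ _ hI]
  by_cases ht : t ∈ toSet (τ I)
  swap
  · rw [haar_of_not_mem ht]
    exact ⟨0, by simp; positivity, by simp⟩
  rcases mem_Dlev_or s x hI with h | ⟨h, h'⟩
  · rw [h]
    exact ⟨0, by simp; positivity, by simp⟩
  have hc : 0 < len I / len (τ I) := div_pos (len_pos' _) (len_pos' _)
  set c := len I / len (τ I) with hcdef
  have hw : (0 : ℝ) < 2 ^ lv s x I := by positivity
  set w : ℝ := 2 ^ lv s x I with hwdef
  have hM := le_bigM τ q s x h h' ht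
  rw [← hcdef, ← hwdef] at hM
  refine ⟨K * (w ^ q * c) ^ (1 / q - 1 / p), ?_, ?_⟩
  · rw [abs_of_nonneg (by positivity)]
    gcongr
  · rw [smul_comm _ (haar (τ I) t)]
    congr 1
    simp only [smul_smul]
    congr 1
    rw [Real.mul_rpow (by positivity) hc.le, ← Real.rpow_mul hw.le,
      Real.rpow_sub hc, show q * (1 / q - 1 / p) = -(q / p - 1) by field_simp; ring,
      Real.rpow_neg hw.le]
    have h1 : 0 < c ^ (1 / p) := by positivity
    have h2 : 0 < w ^ (q / p - 1) := by positivity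
    field_simp

end Helpers

/-- Let `0 < q ≤ p ≤ 2`. There is a constant `A_q > 0`, depending
only on `q`, such that for every Banach space `X` and every injective `τ : D → D`,
`‖T_{τ,q} ⊗ Id_X‖_q ≤ A_q · C₁^{1/q - 1/p} · ‖T_{τ,p} ⊗ Id_X‖_p` in `[0,∞]`. -/
theorem statement1 (q : ℝ) (hq : 0 < q) :
    ∃ A : ℝ, 0 < A ∧
      ∀ (p : ℝ), q ≤ p → p ≤ 2 →
        ∀ (X : Type*) [NormedAddCommGroup X] [NormedSpace ℝ X] [CompleteSpace X]
          (τ : DyadicI → DyadicI), Function.Injective τ →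
            hpOpNorm τ q X ≤
              ENNReal.ofReal A * Cone τ ^ (1 / q - 1 / p) * hpOpNorm τ p X := by
  have hlt : ∀ a : ℝ, 0 < a → (2 : ℝ) ^ (-a) < 1 := fun a ha =>
    Real.rpow_lt_one_of_one_lt_of_neg (by norm_num) (by linarith)
  have hd1 : 0 < 1 - (2 : ℝ) ^ (-q) := by linarith [hlt q hq]
  have hd2 : 0 < 1 - (2 : ℝ) ^ (-(q / 2)) := by linarith [hlt (q / 2) (by positivity)]
  obtain ⟨K, hKdef⟩ : ∃ K : ℝ, K = 1 / (1 - 2 ^ (-q)) := ⟨_, rfl⟩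
  obtain ⟨K', hK'def⟩ : ∃ K' : ℝ, K' = 2 / (1 - 2 ^ (-(q / 2))) := ⟨_, rfl⟩
  have hK1 : 1 ≤ K := by
    rw [hKdef, le_div_iff₀ hd1]
    have : (0 : ℝ) < 2 ^ (-q) := by positivity
    linarith
  have hK' : 0 < K' := by rw [hK'def]; positivity
  refine ⟨K ^ (1 / q) * K', by positivity, ?_⟩
  intro p hqp hp2 X _ _ _ τ hτ
  have hp : 0 < p := hq.trans_le hqp
  have he : 0 ≤ 1 / q - 1 / p := by
    rw [sub_nonneg]; exact one_div_le_one_div_of_le hq hqp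
  unfold hpOpNorm
  refine iSup_le fun s => iSup₂_le fun x hx => ?_
  rw [HpNormV_le_one_iff q hq] at hx
  set y : DyadicI → X := fun I => K'⁻¹ • ((2 : ℝ) ^ lv s x I) ^ (q / p - 1) • x I with hy
  -- `y` lies in the unit ball of `H^p`
  have hyS : ∀ t, sqFn s y t ≤ sqFn s x t ^ (q / p) := by
    intro t
    rw [hy, sqFn_smul, abs_of_pos (inv_pos.mpr hK'), inv_mul_le_iff₀ hK']
    refine (sqFn_weight_le s x (q / p) (by positivity) t).trans ?_
    have := sqFn_nonneg s x t
    rw [hK'def]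
    have h2 : q / 2 ≤ q / p := by gcongr
    gcongr
    norm_num
  have hy1 : HpNormV p s y ≤ 1 := by
    rw [HpNormV_le_one_iff p hp]
    refine le_trans (lintegral_mono fun t => ?_) hx
    calc ENNReal.ofReal (sqFn s y t) ^ p
        ≤ ENNReal.ofReal (sqFn s x t ^ (q / p)) ^ p := by gcongr; exact hyS t
      _ = ENNReal.ofReal (sqFn s x t) ^ q := by
        rw [← ENNReal.ofReal_rpow_of_nonneg (sqFn_nonneg _ _ _) (by positivity),
          ← ENNReal.rpow_mul, div_mul_cancel₀ _ hp.ne']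
  have hT : ENNReal.ofReal (HpNormV p (s.image τ) (rearrCoef τ p s y)) ≤ hpOpNorm τ p X := by
    unfold hpOpNorm
    exact le_iSup_of_le s (le_iSup₂_of_le y hy1 le_rfl)
  have hMint : ∫⁻ t in Set.Icc (0 : ℝ) 1, bigM τ q s x t ≤ Cone τ * ENNReal.ofReal K := by
    refine (lintegral_bigM_le τ q hq s x).trans ?_
    rw [← hKdef]
    gcongr
    exact mul_le_of_le_one_right' hx
  set S := fun t => ENNReal.ofReal (sqFn (s.image τ) (rearrCoef τ p s y) t) with hS
  have hSm : Measurable S := (measurable_sqFn _ _).ennreal_ofReal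
  have hpt : ∀ t, ENNReal.ofReal (sqFn (s.image τ) (rearrCoef τ q s x) t) ^ q
      ≤ ENNReal.ofReal K' ^ q * (bigM τ q s x t ^ (1 - q / p) * (S t ^ p) ^ (q / p)) := by
    intro t
    have h1 := ENNReal.ofReal_le_ofReal (pointwise hτ q p hq hqp K' hK' s x t)
    rw [ENNReal.ofReal_mul (by positivity), ENNReal.ofReal_mul hK'.le,
      ← ENNReal.ofReal_rpow_of_nonneg ENNReal.toReal_nonneg he,
      ENNReal.ofReal_toReal (bigM_lt_top _ _ _ _ _).ne] at h1
    calc _ ≤ _ := ENNReal.rpow_le_rpow h1 hq.le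
      _ = _ := by
        rw [ENNReal.mul_rpow_of_nonneg _ _ hq.le, ENNReal.mul_rpow_of_nonneg _ _ hq.le,
          ← ENNReal.rpow_mul, ← ENNReal.rpow_mul, mul_assoc]
        congr 3
        · field_simp
        · field_simp
  have hmain : ∫⁻ t in Set.Icc (0 : ℝ) 1,
      ENNReal.ofReal (sqFn (s.image τ) (rearrCoef τ q s x) t) ^ q
      ≤ ENNReal.ofReal K' ^ q * ((∫⁻ t in Set.Icc (0 : ℝ) 1, bigM τ q s x t) ^ (1 - q / p) *
        (∫⁻ t in Set.Icc (0 : ℝ) 1, S t ^ p) ^ (q / p)) := by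
    refine (lintegral_mono hpt).trans ?_
    rw [lintegral_const_mul _ (by
      exact ((measurable_bigM τ q s x).pow_const _).mul ((hSm.pow_const _).pow_const _))]
    gcongr
    refine ENNReal.lintegral_mul_norm_pow_le (measurable_bigM τ q s x).aemeasurable
      (hSm.pow_const _).aemeasurable ?_ (by positivity) (by ring)
    rw [sub_nonneg]; exact div_le_one_of_le₀ hqp hp.le
  rw [ofReal_HpNormV q hq]
  rw [ofReal_HpNormV p hp] at hT
  calc _ ≤ _ := ENNReal.rpow_le_rpow hmain (by positivity : 0 ≤ 1 / q)
    _ = ENNReal.ofReal K' * ((∫⁻ t in Set.Icc (0 : ℝ) 1, bigM τ q s x t) ^ (1 / q - 1 / p) *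
        (∫⁻ t in Set.Icc (0 : ℝ) 1, S t ^ p) ^ (1 / p)) := by
        have h1 : (0 : ℝ) ≤ 1 / q := by positivity
        rw [ENNReal.mul_rpow_of_nonneg _ _ h1, ENNReal.mul_rpow_of_nonneg _ _ h1,
          ← ENNReal.rpow_mul, ← ENNReal.rpow_mul, ← ENNReal.rpow_mul,
          mul_one_div_cancel hq.ne', ENNReal.rpow_one]
        congr 3
        · field_simp
        · field_simp
    _ ≤ ENNReal.ofReal K' * ((Cone τ * ENNReal.ofReal K) ^ (1 / q - 1 / p) *
        hpOpNorm τ p X) := by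
        gcongr
    _ ≤ ENNReal.ofReal K' * ((Cone τ ^ (1 / q - 1 / p) * ENNReal.ofReal K ^ (1 / q)) *
        hpOpNorm τ p X) := by
        rw [ENNReal.mul_rpow_of_nonneg _ _ he]
        gcongr
        · exact ENNReal.one_le_ofReal.mpr hK1
        · have : 0 ≤ 1 / p := by positivity
          linarith
    _ = _ := by
        rw [ENNReal.ofReal_mul (by positivity),
          ← ENNReal.ofReal_rpow_of_nonneg (by linarith) (by positivity)]
        unfold hpOpNorm
        ring
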